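/- Let G be a d-dimensional simplicial complex on vertex set Fin n with incidence matrix ∂. Work in the multivariate polynomial ring over ℤ with indeterminates w_{r,f} for r ∈ G_{d-1}, f ∈ G_d and x_r for r ∈ G_{d-1}; let ∂^w be the matrix with entry w_{r,f}·∂[r,f] in position (r,f), and let X be the diagonal matrix indexed by G_{d-1} with diagonal entry x_r. For each rooted forest (F,R) of G fix bijective enumerations α : Fin m → R̄ and β : Fin m → F where m = |R̄| = |F|. Then det(∂^w · ∂ᵀ + X) = Σ over all quadruples (F,R,φ,φ') with (F,R) a rooted forest of G and φ, φ' fitting orientations of (F,R) of sign(π_{α,β,φ}) · sign(π_{α,β,φ'}) · (Π_{r ∈ R̄} ∂[r,φ(r)] · ∂[r,φ'(r)]) · (Π_{r ∈ R̄} w_{r,φ(r)}) · (Π_{r ∈ R} x_r). -/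

import Mathlib

open Finset

/-- `G` is a `d`-dimensional simplicial complex on vertex set `Fin n`. -/
def IsComplex (n d : ℕ) (G : Finset (Finset (Fin n))) : Prop :=
  (∀ f ∈ G, ∀ g ⊆ f, g ∈ G) ∧ (∀ f ∈ G, f.card ≤ d + 1) ∧ ∃ f ∈ G, f.card = d + 1

/-- The `k`-dimensional faces of `G` (faces of cardinality `k+1`). -/
def faces {n : ℕ} (G : Finset (Finset (Fin n))) (k : ℕ) : Finset (Finset (Fin n)) :=
  G.filter fun f => f.card = k + 1

/-- Incidence entry `∂[r,f]`: equals `(-1)^j` if `r` is obtained from `f` by deleting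
its `j`-th smallest element (indexing from 0), and `0` if `r ⊄ f`. -/
def incEntry {n : ℕ} (r f : Finset (Fin n)) : ℤ :=
  if r ⊆ f then
    (-1 : ℤ) ^ ((f \ r).sum fun v => (f.filter fun w => w < v).card)
  else 0

/-- `F` is a forest of the `d`-dimensional complex `G`: the columns of the incidence
matrix indexed by `F` are linearly independent over `ℚ`. -/
def IsForest (n d : ℕ) (G F : Finset (Finset (Fin n))) : Prop :=
  F ⊆ faces G d ∧
    LinearIndependent ℚ fun f : F => fun r : faces G (d - 1) => (incEntry r.1 f.1 : ℚ)

/-- `R` is a root of `F`: the rows indexed by `R̄ = G_{d-1} \ R` of the submatrix of the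
incidence matrix with column set `F` are linearly independent and span the row space of
that submatrix. -/
def IsRoot (n d : ℕ) (G F R : Finset (Finset (Fin n))) : Prop :=
  R ⊆ faces G (d - 1) ∧
    LinearIndependent ℚ
      (fun r : (faces G (d - 1) \ R : Finset (Finset (Fin n))) =>
        fun f : F => (incEntry r.1 f.1 : ℚ)) ∧
    Submodule.span ℚ
        (Set.range fun r : (faces G (d - 1) \ R : Finset (Finset (Fin n))) =>
          fun f : F => (incEntry r.1 f.1 : ℚ)) =
      Submodule.span ℚ
        (Set.range fun r : (faces G (d - 1) : Finset (Finset (Fin n))) =>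
          fun f : F => (incEntry r.1 f.1 : ℚ))

/-- `(F,R)` is a rooted forest of the `d`-dimensional complex `G`. -/
def IsRootedForest (n d : ℕ) (G F R : Finset (Finset (Fin n))) : Prop :=
  IsForest n d G F ∧ IsRoot n d G F R

/-!
Expanding `det(∂^w ∂ᵀ + X)` along the diagonal matrix `X` gives a sum over `R ⊆ G_{d-1}` of
`∏_{r ∈ R} x_r` times the principal minor of `∂^w ∂ᵀ` on the complementary rows `R̄`.
By the Cauchy–Binet argument that minor is a sum over `F` and bijections `φ : R̄ → F` of
`∏ w_{r,φ(r)} ∂[r,φ(r)]` times the minor of `∂` on `R̄` whose columns are ordered by `φ`. That minor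
vanishes unless `(F, R)` is a rooted forest, and its Leibniz expansion is a sum over a second
bijection `φ'` with sign `sign(φ⁻¹φ')`, which is the product of the signs of `π_{α,β,φ}` and
`π_{α,β,φ'}`. Only fitting orientations contribute, since the other products contain a zero entry.
-/

section Determinants

open scoped Matrix

variable {m κ S : Type*} [Fintype m] [DecidableEq m]

theorem sum_piFinset_eq_sum_powerset_sum_equiv [DecidableEq κ] [AddCommMonoid S]
    (Q : Finset κ) (g : (m → κ) → S) (hg : ∀ p, ¬ Function.Injective p → g p = 0) :
    ∑ p ∈ Fintype.piFinset (fun _ : m => Q), g p =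
      ∑ F ∈ Q.powerset, ∑ φ : m ≃ F, g fun r => φ r := by
  have injective_of_ne (p : m → κ) (_ : p ∈ Fintype.piFinset fun _ => Q) (hp : g p ≠ 0) :
      Function.Injective p := not_imp_comm.1 (hg p) hp
  rw [← sum_filter_of_ne injective_of_ne, sum_sigma']
  symm
  refine sum_bij (fun (a : Σ F : Finset κ, m ≃ F) _ r => (a.2 r : κ)) ?maps_to ?injective
    ?surjective fun _ _ => rfl
  case maps_to =>
    rintro ⟨F, φ⟩ hF
    simp only [mem_sigma, mem_powerset] at hF
    simp only [mem_filter, Fintype.mem_piFinset]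
    exact ⟨fun r => hF.1 (φ r).2, Subtype.val_injective.comp φ.injective⟩
  case injective =>
    have range_coe (F : Finset κ) (φ : m ≃ F) : Set.range (fun r => (φ r : κ)) = F := by
      rw [← Function.comp_def Subtype.val, φ.surjective.range_comp, Subtype.range_coe]
    rintro ⟨F, φ⟩ - ⟨F', φ'⟩ - h
    obtain rfl : F = F' := coe_injective <|
      (range_coe F φ).symm.trans <| (congrArg Set.range h).trans (range_coe F' φ')
    obtain rfl : φ = φ' := Equiv.ext fun r => Subtype.ext (congrFun h r)
    rfl
  case surjective =>
    intro p hp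
    simp only [mem_filter, Fintype.mem_piFinset] at hp
    have mem_image (r : m) : p r ∈ univ.image p := mem_image_of_mem p (mem_univ r)
    have bijective : Function.Bijective fun r => (⟨p r, mem_image r⟩ : univ.image p) :=
      ⟨fun a b h => hp.2 (congrArg Subtype.val h), by simp [Function.Surjective]⟩
    refine ⟨⟨univ.image p, Equiv.ofBijective _ bijective⟩, ?_, rfl⟩
    simpa [image_subset_iff] using hp.1

theorem det_of_sum_mul_eq_sum_powerset [DecidableEq κ] [CommRing S] (Q : Finset κ)
    (A B : Matrix m κ S) :
    (Matrix.of fun r s => ∑ f ∈ Q, A r f * B s f).det =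
      ∑ F ∈ Q.powerset, ∑ φ : m ≃ F,
        (∏ r, A r (φ r)) * (B.submatrix id fun r => (φ r : κ)).det := by
  calc (Matrix.of fun r s => ∑ f ∈ Q, A r f * B s f).det
    _ = Matrix.detRowAlternating fun r => ∑ f ∈ Q, A r f • Bᵀ f := by
      congr 1
      ext r s
      simp [Finset.sum_apply]
    _ = ∑ p ∈ Fintype.piFinset fun _ => Q,
          Matrix.detRowAlternating fun r => A r (p r) • Bᵀ (p r) :=
      Matrix.detRowAlternating.toMultilinearMap.map_sum_finset (fun r f => A r f • Bᵀ f) fun _ => Q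
    _ = ∑ p ∈ Fintype.piFinset fun _ => Q, (∏ r, A r (p r)) * (B.submatrix id p).det := by
      refine sum_congr rfl fun p _ => ?_
      rw [← Matrix.det_transpose (B.submatrix id p)]
      exact Matrix.detRowAlternating.map_smul_univ (fun r => A r (p r)) fun r => Bᵀ (p r)
    _ = _ := by
      refine sum_piFinset_eq_sum_powerset_sum_equiv Q _ fun p hp => ?_
      obtain ⟨r, s, hrs, hne⟩ := Function.not_injective_iff.1 hp
      rw [Matrix.det_zero_of_column_eq hne (by simp [hrs]), mul_zero]

theorem det_submatrix_equiv_eq_sum_equiv {n : Type*} [Fintype n] [DecidableEq n] [CommRing S]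
    (N : Matrix m n S) (φ : m ≃ n) :
    (N.submatrix id φ).det =
      ∑ ψ : m ≃ n, (Equiv.Perm.sign (ψ.trans φ.symm) : ℤ) * ∏ r, N r (ψ r) := by
  rw [← Matrix.det_transpose, Matrix.det_apply']
  refine Fintype.sum_equiv (Equiv.equivCongr (.refl m) φ) _ _ fun σ => ?_
  have trans_symm : (Equiv.equivCongr (.refl m) φ σ).trans φ.symm = σ := by ext; simp
  rw [trans_symm]
  simp

theorem sign_trans_symm_eq_mul {k n : Type*} [Fintype k] [DecidableEq k]
    (α : k ≃ m) (β : k ≃ n) (φ ψ : m ≃ n) :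
    Equiv.Perm.sign (ψ.trans φ.symm) =
      Equiv.Perm.sign ((α.trans φ).trans β.symm) * Equiv.Perm.sign ((α.trans ψ).trans β.symm) := by
  have factor : (α.trans (ψ.trans φ.symm)).trans α.symm =
      ((α.trans φ).trans β.symm)⁻¹ * ((α.trans ψ).trans β.symm) := by
    ext; simp [Equiv.Perm.inv_def]
  rw [← Equiv.Perm.sign_trans_trans_symm _ α, factor, Equiv.Perm.sign_mul, Equiv.Perm.sign_inv]

theorem det_add_diagonal_eq_sum_minors [CommRing S] (x : m → S) (M : Matrix m m S) :
    (M + Matrix.diagonal x).det =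
      ∑ R : Finset m, (∏ r ∈ R, x r) *
        (M.submatrix (↑) (↑) : Matrix ↥(Rᶜ) ↥(Rᶜ) S).det := by
  rw [add_comm]
  refine (Matrix.detRowAlternating.map_add_univ (Matrix.diagonal x) M).trans <|
    sum_congr rfl fun R _ => ?_
  rw [← Matrix.det_piecewise_one_eq_submatrix_det, ← univ_inter R, ← Finset.prod_ite_mem,
    ← Matrix.det_mul_column, univ_inter]
  refine congrArg Matrix.det ?_
  ext r s
  by_cases hr : r ∈ R <;>
    simp [hr, Finset.piecewise, Matrix.row, Matrix.diagonal_apply, Matrix.one_apply]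

theorem det_submatrix_add_diagonal_eq_sum_powerset {ι : Type*} [DecidableEq ι] [CommRing S]
    (P : Finset ι) (M : Matrix ι ι S) (x : ι → S) :
    ((M.submatrix (↑) (↑) : Matrix P P S) + Matrix.diagonal fun r : P => x r).det =
      ∑ R ∈ P.powerset, (∏ r ∈ R, x r) *
        (M.submatrix (↑) (↑) : Matrix ↥(P \ R) ↥(P \ R) S).det := by
  have powerset_eq_map : P.powerset =
      univ.map (mapEmbedding (Function.Embedding.subtype (· ∈ P))).toEmbedding := by
    ext R
    simp only [mem_powerset, mem_map, mem_univ, true_and]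
    exact ⟨fun hR => ⟨R.subtype (· ∈ P), subtype_map_of_mem hR⟩,
      by rintro ⟨R, rfl⟩; exact map_subtype_subset R⟩
  rw [powerset_eq_map, sum_map, det_add_diagonal_eq_sum_minors]
  refine sum_congr rfl fun R _ => ?_
  have map_compl : Rᶜ.map (.subtype (· ∈ P)) = P \ R.map (.subtype (· ∈ P)) := by
    rw [compl_eq_univ_sdiff, Finset.map_sdiff, univ_eq_attach, attach_map_val]
  rw [RelEmbedding.coe_toEmbedding, mapEmbedding_apply, prod_map, ← map_compl,
    ← Matrix.det_submatrix_equiv_self (Rᶜ.equivMap (.subtype (· ∈ P)))]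
  rfl

end Determinants

section RootedForests

variable {ι κ A S : Type*} [DecidableEq ι]

/-- `(F, R)` is a rooted forest of the matrix `D` with row set `P` and column set `Q`: the columns
in `F` are linearly independent over `K`, and the rows in `P \ R`, restricted to `F`, form a basis
of the row space of the columns `F`. For the incidence matrix of a complex this is
`IsRootedForest`. -/
def IsMatrixRootedForest (K : Type*) [CommRing A] [Field K] [Algebra A K] (D : Matrix ι κ A)
    (P : Finset ι) (Q F : Finset κ) (R : Finset ι) : Prop :=
  (F ⊆ Q ∧ LinearIndependent K fun (f : F) (r : P) => algebraMap A K (D r f)) ∧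
    R ⊆ P ∧
    LinearIndependent K (fun (r : ↥(P \ R)) (f : F) => algebraMap A K (D r f)) ∧
    Submodule.span K (Set.range fun (r : ↥(P \ R)) (f : F) => algebraMap A K (D r f)) =
      Submodule.span K (Set.range fun (r : P) (f : F) => algebraMap A K (D r f))

theorem IsMatrixRootedForest.of_det_ne_zero (K : Type*) [CommRing A] [Field K] [Algebra A K]
    [FaithfulSMul A K] {D : Matrix ι κ A} {P R : Finset ι} {Q F : Finset κ} (hF : F ⊆ Q)
    (hR : R ⊆ P) (φ : ↥(P \ R) ≃ F)
    (hdet : (D.submatrix (↑) fun r : ↥(P \ R) => (φ r : κ)).det ≠ 0) :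
    IsMatrixRootedForest K D P Q F R := by
  let N : Matrix ↥(P \ R) ↥(P \ R) K :=
    (algebraMap A K).mapMatrix (D.submatrix (↑) fun r => (φ r : κ))
  have det_ne_zero : N.det ≠ 0 := by
    rw [← RingHom.map_det]
    exact (map_ne_zero_iff _ (FaithfulSMul.algebraMap_injective A K)).2 hdet
  have rows_independent :
      LinearIndependent K fun (r : ↥(P \ R)) (f : F) => algebraMap A K (D r f) :=
    .of_comp (LinearMap.funLeft K K φ) (Matrix.linearIndependent_rows_of_det_ne_zero det_ne_zero)
  have cols_independent :
      LinearIndependent K fun (f : F) (r : P) => algebraMap A K (D r f) := by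
    refine .of_comp (LinearMap.funLeft K K (Set.inclusion (sdiff_subset (s := P) (t := R)))) ?_
    rw [← linearIndependent_equiv φ]
    exact Matrix.linearIndependent_cols_of_det_ne_zero det_ne_zero
  have rows_span_top :
      Submodule.span K (Set.range fun (r : ↥(P \ R)) (f : F) => algebraMap A K (D r f)) = ⊤ :=
    rows_independent.span_eq_top_of_card_eq_finrank' <| by
      rw [Module.finrank_fintype_fun_eq_card, Fintype.card_congr φ]
  refine ⟨⟨hF, cols_independent⟩, hR, rows_independent, ?_⟩
  refine le_antisymm (Submodule.span_mono ?_) (rows_span_top ▸ le_top)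
  rintro _ ⟨r, rfl⟩
  exact ⟨⟨r, sdiff_subset r.2⟩, rfl⟩

theorem det_weighted_mul_transpose_eq_sum_powerset {m : Type*} [Fintype m] [DecidableEq m]
    [DecidableEq κ] [CommRing A] [CommRing S] [Algebra A S] (Q : Finset κ) (N : Matrix m κ A)
    (w : m → κ → S) :
    (Matrix.of fun r s => ∑ f ∈ Q, w r f * algebraMap A S (N r f) * algebraMap A S (N s f)).det =
      ∑ F ∈ Q.powerset, ∑ φ : m ≃ F, (∏ r, w r (φ r) * algebraMap A S (N r (φ r))) *
        algebraMap A S (N.submatrix id fun r => (φ r : κ)).det := by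
  simp only [RingHom.map_det]
  exact det_of_sum_mul_eq_sum_powerset Q (.of fun r f => w r f * algebraMap A S (N r f))
    (N.map (algebraMap A S))

open scoped Classical in
theorem sum_prod_mul_det_eq_sum_fitting {m : Type*} [Fintype m] [DecidableEq m]
    [DecidableEq κ] [CommRing A] [CommRing S] [Algebra A S]
    (N : Matrix m κ A) (w : m → κ → S) (F : Finset κ) :
    ∑ φ : m ≃ F, (∏ r, w r (φ r) * algebraMap A S (N r (φ r))) *
        algebraMap A S (N.submatrix id fun r => (φ r : κ)).det =
      ∑ φ : m ≃ F with ∀ r, N r (φ r) ≠ 0, ∑ φ' : m ≃ F with ∀ r, N r (φ' r) ≠ 0,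
        algebraMap A S ((Equiv.Perm.sign (φ'.trans φ.symm) : ℤ) *
            ∏ r, N r (φ r) * N r (φ' r)) * ∏ r, w r (φ r) := by
  have eq_zero_of_not_fitting {φ : m ≃ F} (hφ : ¬ ∀ r, N r (φ r) ≠ 0) : ∏ r, N r (φ r) = 0 := by
    obtain ⟨r, hr⟩ := not_forall_not.1 hφ
    exact prod_eq_zero (mem_univ r) hr
  symm
  calc
    _ = ∑ φ : m ≃ F, ∑ φ' : m ≃ F,
          algebraMap A S ((Equiv.Perm.sign (φ'.trans φ.symm) : ℤ) *
            ∏ r, N r (φ r) * N r (φ' r)) * ∏ r, w r (φ r) := by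
      rw [sum_filter_of_ne]
      · refine sum_congr rfl fun φ _ => sum_filter_of_ne fun φ' _ => ?_
        exact not_imp_comm.1 fun hφ' => by simp [prod_mul_distrib, eq_zero_of_not_fitting hφ']
      · refine fun φ _ => not_imp_comm.1 fun hφ => sum_eq_zero fun φ' _ => ?_
        simp [prod_mul_distrib, eq_zero_of_not_fitting hφ]
    _ = _ := sum_congr rfl fun φ _ => by
      have leibniz : (N.submatrix id fun r => (φ r : κ)).det =
          ∑ φ' : m ≃ F, (Equiv.Perm.sign (φ'.trans φ.symm) : ℤ) * ∏ r, N r (φ' r) :=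
        det_submatrix_equiv_eq_sum_equiv (N.submatrix id Subtype.val) φ
      rw [leibniz, map_sum, mul_sum]
      refine sum_congr rfl fun φ' _ => ?_
      simp only [prod_mul_distrib, map_mul, map_prod]
      ring

open scoped Classical in
theorem det_weighted_directed_lap_eq_sum_bidirected_rootedForests_general [DecidableEq κ]
    (K : Type*) [CommRing A] [Field K] [Algebra A K] [FaithfulSMul A K]
    [CommRing S] [Algebra A S] (D : Matrix ι κ A) (P : Finset ι) (Q : Finset κ)
    (w : P → Q → S) (x : P → S)
    (α : ∀ R : Finset ι, Fin #(P \ R) ≃ ↥(P \ R))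
    (β : ∀ F R, IsMatrixRootedForest K D P Q F R → (Fin #(P \ R) ≃ F)) :
    ((Matrix.of fun r f => w r f * algebraMap A S (D r f)) *
          (Matrix.of fun (r : P) (f : Q) => algebraMap A S (D r f)).transpose +
        Matrix.diagonal x).det =
      ∑ F ∈ Q.powerset, ∑ R ∈ P.powerset,
        if h : IsMatrixRootedForest K D P Q F R then
          ∑ φ : ↥(P \ R) ≃ F with ∀ r : ↥(P \ R), D r (φ r) ≠ 0,
            ∑ φ' : ↥(P \ R) ≃ F with ∀ r : ↥(P \ R), D r (φ' r) ≠ 0,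
              algebraMap A S ((Equiv.Perm.sign (((α R).trans φ).trans (β F R h).symm) : ℤ) *
                    (Equiv.Perm.sign (((α R).trans φ').trans (β F R h).symm) : ℤ) *
                    ∏ r : ↥(P \ R), D r (φ r) * D r (φ' r)) *
                (∏ r : ↥(P \ R), w ⟨r, (mem_sdiff.1 r.2).1⟩ ⟨φ r, h.1.1 (φ r).2⟩) *
                ∏ r ∈ R.attach, x ⟨r, h.2.1 r.2⟩
        else 0 := by
  -- Extending the weights beyond `P` and `Q` lets them be evaluated without membership proofs.
  obtain ⟨w, rfl⟩ : ∃ w' : ι → κ → S, w = fun (r : P) (f : Q) => w' r f := by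
    obtain ⟨w', hw'⟩ := (Subtype.val_injective.prodMap Subtype.val_injective).surjective_comp_right
      (Function.uncurry w)
    exact ⟨Function.curry w', funext₂ fun r f => (congrFun hw' (r, f)).symm⟩
  obtain ⟨x, rfl⟩ : ∃ x' : ι → S, x = fun r : P => x' r :=
    (Subtype.val_injective.surjective_comp_right x).imp fun _ => Eq.symm
  let L : Matrix ι ι S := .of fun r s =>
    ∑ f ∈ Q, w r f * algebraMap A S (D r f) * algebraMap A S (D s f)
  have lap_eq : (Matrix.of fun (r : P) (f : Q) => w r f * algebraMap A S (D r f)) *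
      (Matrix.of fun (r : P) (f : Q) => algebraMap A S (D r f)).transpose =
        L.submatrix (↑) (↑) := by
    ext r s
    exact sum_coe_sort Q fun f => w r f * algebraMap A S (D r f) * algebraMap A S (D s f)
  rw [lap_eq, det_submatrix_add_diagonal_eq_sum_powerset, sum_comm]
  refine sum_congr rfl fun R hR => ?_
  have minor_eq : (L.submatrix (↑) (↑) : Matrix ↥(P \ R) ↥(P \ R) S).det =
      ∑ F ∈ Q.powerset, ∑ φ : ↥(P \ R) ≃ F,
        (∏ r : ↥(P \ R), w r (φ r) * algebraMap A S (D r (φ r))) *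
          algebraMap A S (D.submatrix (↑) fun r : ↥(P \ R) => (φ r : κ)).det :=
    det_weighted_mul_transpose_eq_sum_powerset Q (D.submatrix ((↑) : ↥(P \ R) → ι) id) fun r => w r
  rw [minor_eq, mul_sum]
  refine sum_congr rfl fun F hF => ?_
  split_ifs with h
  · refine (congrArg _ (sum_prod_mul_det_eq_sum_fitting
      (D.submatrix ((↑) : ↥(P \ R) → ι) id) (fun r => w r) F)).trans ?_
    simp only [mul_sum]
    refine sum_congr rfl fun φ _ => sum_congr rfl fun φ' _ => ?_
    rw [sign_trans_symm_eq_mul (α R) (β F R h), prod_attach R x, Units.val_mul, Int.cast_mul,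
      mul_comm]
    rfl
  · have det_eq_zero (φ : ↥(P \ R) ≃ F) :
        (D.submatrix (↑) fun r : ↥(P \ R) => (φ r : κ)).det = 0 :=
      not_imp_comm.1 (IsMatrixRootedForest.of_det_ne_zero K (mem_powerset.1 hF)
        (mem_powerset.1 hR) φ) h
    simp only [det_eq_zero, map_zero, mul_zero, sum_const_zero]

end RootedForests

theorem incEntry_ne_zero_iff {n : ℕ} {r f : Finset (Fin n)} : incEntry r f ≠ 0 ↔ r ⊆ f := by
  simp [incEntry]

open MvPolynomial in
open scoped Classical in
/-- In the multivariate polynomial ring with indeterminates `w_{r,f}`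
(`r ∈ G_{d-1}`, `f ∈ G_d`) and `x_r` (`r ∈ G_{d-1}`), let `∂^w` have entries
`w_{r,f}·∂[r,f]` and let `X` be the diagonal matrix of the `x_r`. Then
`det(∂^w·∂ᵀ + X)` equals the sum over all quadruples `(F,R,φ,φ')`, with `(F,R)` a
rooted forest of `G` and `φ, φ'` fitting orientations, of
`sign(π_{α,β,φ})·sign(π_{α,β,φ'})·(Π_{r∈R̄} ∂[r,φ(r)]·∂[r,φ'(r)])·(Π_{r∈R̄} w_{r,φ(r)})·(Π_{r∈R} x_r)`. -/
theorem det_weighted_directed_lap_eq_sum_bidirected_rootedForests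
    (n d : ℕ) (hn : 1 ≤ n) (hd : 1 ≤ d)
    (G : Finset (Finset (Fin n))) (hG : IsComplex n d G)
    (α : ∀ R : Finset (Finset (Fin n)),
      Fin ((faces G (d - 1) \ R).card) ≃
        (faces G (d - 1) \ R : Finset (Finset (Fin n))))
    (β : ∀ F R : Finset (Finset (Fin n)), IsRootedForest n d G F R →
      (Fin ((faces G (d - 1) \ R).card) ≃ F)) :
    Matrix.det
        ((Matrix.of fun (r : (faces G (d - 1) : Finset (Finset (Fin n))))
              (f : (faces G d : Finset (Finset (Fin n)))) =>
            X (Sum.inl (r, f)) *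
              (C (incEntry r.1 f.1) :
                MvPolynomial
                  (((faces G (d - 1) : Finset (Finset (Fin n))) ×
                      (faces G d : Finset (Finset (Fin n)))) ⊕
                    (faces G (d - 1) : Finset (Finset (Fin n)))) ℤ)) *
          (Matrix.of fun (r : (faces G (d - 1) : Finset (Finset (Fin n))))
              (f : (faces G d : Finset (Finset (Fin n)))) =>
            (C (incEntry r.1 f.1) :
              MvPolynomial
                (((faces G (d - 1) : Finset (Finset (Fin n))) ×
                    (faces G d : Finset (Finset (Fin n)))) ⊕
                  (faces G (d - 1) : Finset (Finset (Fin n)))) ℤ)).transpose +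
          Matrix.diagonal (fun r => X (Sum.inr r))) =
      ∑ F ∈ (faces G d).powerset, ∑ R ∈ (faces G (d - 1)).powerset,
        if h : IsRootedForest n d G F R then
          ∑ φ ∈ Finset.univ.filter
              (fun φ : (faces G (d - 1) \ R : Finset (Finset (Fin n))) ≃ F =>
                ∀ r, r.1 ⊆ (φ r).1),
            ∑ φ' ∈ Finset.univ.filter
                (fun φ' : (faces G (d - 1) \ R : Finset (Finset (Fin n))) ≃ F =>
                  ∀ r, r.1 ⊆ (φ' r).1),
              C ((Equiv.Perm.sign (((α R).trans φ).trans (β F R h).symm) : ℤ) *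
                    (Equiv.Perm.sign (((α R).trans φ').trans (β F R h).symm) : ℤ) *
                    ∏ r : (faces G (d - 1) \ R : Finset (Finset (Fin n))),
                      incEntry r.1 (φ r).1 * incEntry r.1 (φ' r).1) *
                (∏ r : (faces G (d - 1) \ R : Finset (Finset (Fin n))),
                  X (Sum.inl
                    (⟨r.1, (Finset.mem_sdiff.mp r.2).1⟩, ⟨(φ r).1, h.1.1 (φ r).2⟩))) *
                (∏ r ∈ R.attach, X (Sum.inr ⟨r.1, h.2.1 r.2⟩))
        else 0 := by
  have h := det_weighted_directed_lap_eq_sum_bidirected_rootedForests_general (A := ℤ)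
    (S := MvPolynomial _ ℤ) ℚ incEntry (faces G (d - 1)) (faces G d)
    (fun r f => X (Sum.inl (r, f))) (fun r => X (Sum.inr r)) α β
  simp only [incEntry_ne_zero_iff] at h
  exact h
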